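/- Let f, g: [0,∞) → ℝ be continuous (or locally integrable) functions whose convolution satisfies ∫_0^t f(s) g(t-s) ds = 0 for all t ∈ [0,T]. If moreover g is real-analytic on (0,∞) and there exists T₁ > 0 with g(t) ≠ 0 for all t > T₁, then f = 0 almost everywhere on (0,T). -/

import Mathlib

open MeasureTheory

section

open Metric Real Set Filter
open scoped Topology Convolution

theorem CircleIntegrable.poissonKernel_mul {c w : ℂ} {R : ℝ} {g : ℂ → ℝ}
    (hw : w ∈ ball c R) (hg : CircleIntegrable g c R) :
    CircleIntegrable (fun z => poissonKernel c w z * g z) c R := by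
  have hR : 0 < R := pos_of_mem_ball hw
  have hk : Continuous fun θ : ℝ => poissonKernel c w (circleMap c R θ) := by
    unfold poissonKernel
    refine Continuous.div (by fun_prop) (by fun_prop) fun θ => ?_
    have : circleMap c R θ - c - (w - c) ≠ 0 := by
      rw [sub_sub_sub_cancel_right, sub_ne_zero]
      exact circleMap_ne_mem_ball hw θ
    positivity
  exact IntervalIntegrable.continuousOn_mul hg hk.continuousOn

theorem log_norm_sub_le_circleAverage_poissonKernel {c w u : ℂ} {R : ℝ}
    (hw : w ∈ ball c R) (hu : u ∈ closedBall c R) (hwu : w ≠ u) :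
    log ‖w - u‖ ≤ circleAverage (fun z => poissonKernel c w z * log ‖z - u‖) c R := by
  have hR : 0 < R := pos_of_mem_ball hw
  rcases eq_or_lt_of_le (mem_closedBall.1 hu) with h | h
  · rw [← circleAverage_re_herglotzRieszKernel_mul_log (mem_sphere.2 h) hw,
      ← poissonKernel_eq_re_herglotzRieszKernel]
    rfl
  let q : ℂ → ℂ := fun z => (R ^ 2 - (starRingEnd ℂ) (u - c) * (z - c)) / R
  have hRC : (R : ℂ) ≠ 0 := by exact_mod_cast hR.ne'
  have hu' : u - c ∈ ball (0 : ℂ) R := by simpa [dist_eq_norm] using h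
  have hfac : ∀ z, z ≠ u → q z = Complex.canonicalFactor R (u - c) (z - c) * (z - u) := by
    intro z hz
    have : z - u ≠ 0 := sub_ne_zero.2 hz
    simp only [q, Complex.canonicalFactor_apply, sub_sub_sub_cancel_right]
    field_simp
  have hq0 : ∀ z ∈ closedBall c R, q z ≠ 0 := by
    intro z hz
    by_cases hzu : z = u
    · subst hzu
      simp only [q, ne_eq, div_eq_zero_iff, hRC, or_false]
      rw [← Complex.normSq_eq_conj_mul_self, Complex.normSq_eq_norm_sq]
      norm_cast
      have : ‖z - c‖ < R := by simpa using hu'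
      nlinarith [norm_nonneg (z - c)]
    · rw [hfac z hzu]
      refine mul_ne_zero (Complex.canonicalFactor_ne_zero hu' ?_ ?_) (sub_ne_zero.2 hzu)
      · simpa [dist_eq_norm] using hz
      · simpa using hzu
  have hqs : ∀ z ∈ sphere c R, ‖q z‖ = ‖z - u‖ := by
    intro z hz
    have hzu : z ≠ u := by
      rintro rfl
      exact h.ne (mem_sphere.1 hz)
    rw [hfac z hzu, norm_mul, Complex.norm_canonicalFactor_eval_circle_eq_one hu'
      (by simpa [dist_eq_norm] using hz), one_mul]
  have hharm : InnerProductSpace.HarmonicOnNhd (fun z => log ‖q z‖) (closedBall c R) :=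
    fun z hz => AnalyticAt.harmonicAt_log_norm (by fun_prop) (hq0 z hz)
  have hP := hharm.circleAverage_poissonKernel_smul hw
  have hle : ‖w - u‖ ≤ ‖q w‖ := by
    rw [norm_div, Complex.norm_of_nonneg hR.le, le_div_iff₀ hR]
    refine le_of_sq_le_sq ?_ (norm_nonneg _)
    have h1 : Complex.normSq (u - c) ≤ R ^ 2 := by
      rw [Complex.normSq_eq_norm_sq, ← dist_eq_norm]
      gcongr
    have h2 : Complex.normSq (w - c) ≤ R ^ 2 := by
      rw [Complex.normSq_eq_norm_sq, ← dist_eq_norm]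
      gcongr
      exact (mem_ball.1 hw).le
    have h3 := mul_nonneg (sub_nonneg.2 h1) (sub_nonneg.2 h2)
    rw [mul_pow, ← Complex.normSq_eq_norm_sq, ← Complex.normSq_eq_norm_sq]
    simp only [Complex.normSq_apply, Complex.sub_re, Complex.sub_im, Complex.mul_re,
      Complex.mul_im, Complex.conj_re, Complex.conj_im, ← Complex.ofReal_pow,
      Complex.ofReal_re, Complex.ofReal_im] at h3 ⊢
    nlinarith only [h3]
  calc log ‖w - u‖ ≤ log ‖q w‖ := log_le_log (norm_pos_iff.2 (sub_ne_zero.2 hwu)) hle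
    _ = circleAverage (poissonKernel c w • fun z => log ‖q z‖) c R := hP.symm
    _ = circleAverage (fun z => poissonKernel c w z * log ‖z - u‖) c R := by
      refine circleAverage_congr_sphere fun z hz => ?_
      rw [abs_of_pos hR] at hz
      simp [hqs z hz]

theorem log_norm_le_circleAverage_poissonKernel {c w : ℂ} {R : ℝ} {f : ℂ → ℂ}
    (hf : AnalyticOnNhd ℂ f (closedBall c R)) (hw : w ∈ ball c R) (hfw : f w ≠ 0) :
    log ‖f w‖ ≤ circleAverage (fun z => poissonKernel c w z * log ‖f z‖) c R := by
  have hR : 0 < R := pos_of_mem_ball hw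
  have hwB : w ∈ closedBall c R := ball_subset_closedBall hw
  set D := MeromorphicOn.divisor f (closedBall c R) with hD
  have hDfin : (⇑D).HasFiniteSupport := D.finiteSupport (isCompact_closedBall c R)
  obtain ⟨S, hS⟩ : ∃ S : Finset ℂ, ∀ u, u ∈ S ↔ D u ≠ 0 :=
    ⟨Set.Finite.toFinset hDfin, fun u => Set.Finite.mem_toFinset _⟩
  have horder : ∀ u : closedBall c R, meromorphicOrderAt f u ≠ ⊤ := by
    rw [← hf.meromorphicOn.exists_meromorphicOrderAt_ne_top_iff_forall
      (Metric.isConnected_closedBall hR.le)]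
    refine ⟨⟨w, hwB⟩, ?_⟩
    simp [((hf w hwB).meromorphicNFAt).meromorphicOrderAt_eq_zero_iff.2 hfw]
  obtain ⟨g, hg, hg0, hfg⟩ := hf.meromorphicOn.extract_zeros_poles horder hDfin
  have hlog := MeromorphicOn.extract_zeros_poles_log hg0 hfg
  have hacc : AccPt w (𝓟 (closedBall c R)) := by
    refine accPt_iff_frequently_nhdsNE.mpr (Eventually.frequently ?_)
    exact nhdsWithin_le_nhds (mem_of_superset (isOpen_ball.mem_nhds hw) ball_subset_closedBall)
  have hw0 := MeromorphicOn.log_norm_meromorphicTrailingCoeffAt_extract_zeros_poles hDfin hwB hacc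
    (hf.meromorphicOn w hwB) (hg w hwB) (hg0 ⟨w, hwB⟩) hfg
  rw [(hf w hwB).meromorphicTrailingCoeffAt_of_ne_zero hfw] at hw0
  have hsum : (∑ᶠ u, (D u * log ‖· - u‖) : ℂ → ℝ)
      = ∑ u ∈ S, fun z => (D u : ℝ) * log ‖z - u‖ := by
    refine finsum_eq_sum_of_support_subset _ fun u => ?_
    contrapose
    intro hu
    have hu0 : D u = 0 := by simpa [hS] using hu
    simp only [Function.mem_support, ne_eq, not_not, hu0]
    ext
    simp
  have hintu : ∀ u, CircleIntegrable (fun z => log ‖z - u‖) c R := fun u =>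
    (analyticOnNhd_id.sub analyticOnNhd_const).meromorphicOn.circleIntegrable_log_norm
  have hharm : InnerProductSpace.HarmonicOnNhd (fun z => log ‖g z‖) (closedBall c R) :=
    fun z hz => (hg z hz).harmonicAt_log_norm (hg0 ⟨z, hz⟩)
  have hgint : CircleIntegrable (fun z => log ‖g z‖) c R :=
    (hg.mono (by rw [abs_of_pos hR]; exact sphere_subset_closedBall)).meromorphicOn
      |>.circleIntegrable_log_norm
  calc log ‖f w‖ = ∑ᶠ u, (D u : ℝ) * log ‖w - u‖ + log ‖g w‖ := hw0
    _ = ∑ u ∈ S, (D u : ℝ) * log ‖w - u‖ + log ‖g w‖ := by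
      congr 1
      refine finsum_eq_sum_of_support_subset _ fun u => ?_
      contrapose
      intro hu
      have hu0 : D u = 0 := by simpa [hS] using hu
      simp [hu0]
    _ ≤ ∑ u ∈ S,
          circleAverage (fun z => (D u : ℝ) * (poissonKernel c w z * log ‖z - u‖)) c R
        + circleAverage (poissonKernel c w • fun z => log ‖g z‖) c R := by
      rw [hharm.circleAverage_poissonKernel_smul hw]
      gcongr with u hu
      have hu0 : D u ≠ 0 := (hS u).1 hu
      have huB : u ∈ closedBall c R := D.supportWithinDomain hu0
      have hwu : w ≠ u := by
        rintro rfl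
        refine hu0 ?_
        rw [hD, MeromorphicOn.divisor_apply hf.meromorphicOn hwB,
          ((hf w hwB).meromorphicNFAt).meromorphicOrderAt_eq_zero_iff.2 hfw]
        rfl
      have := circleAverage_fun_smul (a := (D u : ℝ)) (c := c) (R := R)
        (f := fun z => poissonKernel c w z * log ‖z - u‖)
      simp only [smul_eq_mul] at this
      rw [this]
      refine mul_le_mul_of_nonneg_left
        (log_norm_sub_le_circleAverage_poissonKernel hw huB hwu) ?_
      exact_mod_cast MeromorphicOn.AnalyticOnNhd.divisor_nonneg hf u
    _ = circleAverage (fun z => poissonKernel c w z * log ‖f z‖) c R := by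
      rw [← circleAverage_sum, ← circleAverage_add]
      · refine circleAverage_congr_codiscreteWithin ?_ hR.ne'
        rw [abs_of_pos hR]
        filter_upwards [codiscreteWithin_mono sphere_subset_closedBall hlog] with z hz
        rw [hz, hsum]
        simp [Finset.sum_apply, Finset.mul_sum, mul_add]
        exact Finset.sum_congr rfl fun _ _ => by ring
      · exact CircleIntegrable.sum _ fun u _ => ((hintu u).poissonKernel_mul hw).const_smul
      · exact hgint.poissonKernel_mul hw
      · exact fun u _ => ((hintu u).poissonKernel_mul hw).const_smul

theorem log_norm_le_circleAverage_log_norm {F : ℂ → ℂ} (hF : Differentiable ℂ F)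
    (hF1 : ∀ z : ℂ, 0 ≤ z.re → ‖F z‖ ≤ 1) {x R : ℝ} (hx : 0 < x) (hxR : x ≤ R) (hFx : F x ≠ 0) :
    4 * R / x * log ‖F x‖ ≤ circleAverage (fun z => log ‖F z‖) R R := by
  have hR : 0 < R := hx.trans_le hxR
  have hxB : (x : ℂ) ∈ ball (R : ℂ) R := by
    rw [mem_ball, dist_eq_norm, ← Complex.ofReal_sub, Complex.norm_real, norm_eq_abs, abs_lt]
    constructor <;> linarith
  have hre : ∀ z ∈ sphere (R : ℂ) R, 0 ≤ z.re := by
    intro z hz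
    rw [mem_sphere, dist_eq_norm] at hz
    have := (abs_le.1 ((Complex.abs_re_le_norm (z - R)).trans hz.le)).1
    simp at this
    linarith
  have hint : CircleIntegrable (fun z => log ‖F z‖) R R :=
    MeromorphicOn.circleIntegrable_log_norm fun z _ => (hF.analyticAt z).meromorphicAt
  have hP := log_norm_le_circleAverage_poissonKernel (f := F) (c := R) (R := R) (w := x)
    (fun z _ => hF.analyticAt z) hxB hFx
  have hmono : circleAverage (fun z => poissonKernel R x z * log ‖F z‖) R R
      ≤ circleAverage (fun z => (x / (4 * R)) * log ‖F z‖) R R := by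
    refine circleAverage_mono (hint.poissonKernel_mul hxB) hint.const_smul fun z hz => ?_
    rw [abs_of_pos hR] at hz
    refine mul_le_mul_of_nonpos_right ?_ (log_nonpos (norm_nonneg _) (hF1 z (hre z hz)))
    have hzR : ‖z - R‖ = R := by simpa [dist_eq_norm] using hz
    have hxR' : ‖(x : ℂ) - R‖ = R - x := by
      rw [← Complex.ofReal_sub, Complex.norm_real, norm_eq_abs, abs_of_nonpos (by linarith)]
      ring
    have hzx : z ≠ x := by
      rintro rfl
      rw [hzR] at hxR'
      linarith
    have hpos : 0 < ‖z - x‖ := norm_pos_iff.2 (sub_ne_zero.2 hzx)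
    have hle : ‖z - x‖ ≤ 2 * R := by
      have := norm_sub_le_norm_sub_add_norm_sub z R x
      rw [hzR, norm_sub_rev (R : ℂ) x, hxR'] at this
      linarith
    rw [poissonKernel_def, sub_sub_sub_cancel_right, hzR, hxR', div_le_div_iff₀ (by positivity)
      (by positivity)]
    have h2 : ‖z - x‖ ^ 2 ≤ (2 * R) ^ 2 := by gcongr
    calc x * ‖z - x‖ ^ 2 ≤ x * (2 * R) ^ 2 := by gcongr
      _ ≤ _ := by nlinarith [mul_nonneg (mul_nonneg hx.le hR.le) (sub_nonneg.2 hxR)]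
  have hs := circleAverage_fun_smul (a := x / (4 * R)) (c := (R : ℂ)) (R := R)
    (f := fun z => log ‖F z‖)
  simp only [smul_eq_mul] at hs
  rw [hs] at hmono
  have h := hP.trans hmono
  calc 4 * R / x * log ‖F x‖
      ≤ 4 * R / x * (x / (4 * R) * circleAverage (fun z => log ‖F z‖) R R) := by gcongr
    _ = _ := by field_simp

theorem exists_forall_le_circleAverage_log_norm {F : ℂ → ℂ} (hF : Differentiable ℂ F)
    {A ε : ℝ} (hA : 0 < A) (hε : 0 < ε) (hFA : ∀ z : ℂ, 0 ≤ z.re → ‖F z‖ ≤ A)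
    (h : ∀ X : ℝ, ∃ x ≥ X, exp (-ε * x) ≤ ‖F x‖) :
    (∃ x : ℝ, F x ≠ 0) ∧
      ∃ X : ℝ, ∀ R ≥ X, -(8 * ε * R) ≤ circleAverage (fun z => log ‖F z / A‖) R R := by
  obtain ⟨x, hx, hFx⟩ := h (max 1 (log A / ε))
  have hx1 : 0 < x := one_pos.trans_le ((le_max_left _ _).trans hx)
  have hxA : log A ≤ ε * x := by
    have := (le_max_right _ _).trans hx
    rwa [div_le_iff₀ hε, mul_comm] at this
  have hFpos : 0 < ‖F x‖ := (exp_pos _).trans_le hFx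
  have hF0 : F x ≠ 0 := norm_pos_iff.1 hFpos
  have hAC : (A : ℂ) ≠ 0 := by exact_mod_cast hA.ne'
  refine ⟨⟨x, hF0⟩, x, fun R hR => ?_⟩
  have key := log_norm_le_circleAverage_log_norm (F := fun z => F z / A) (hF.div_const _)
    (fun z hz => by
      rw [norm_div, Complex.norm_of_nonneg hA.le, div_le_one hA]
      exact hFA z hz) hx1 hR (div_ne_zero hF0 hAC)
  refine le_trans ?_ key
  have hlog : -ε * x ≤ log ‖F x‖ := (le_log_iff_exp_le hFpos).2 hFx
  rw [norm_div, Complex.norm_of_nonneg hA.le, log_div hFpos.ne' hA.ne']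
  have hR0 : 0 < R := hx1.trans_le hR
  calc -(8 * ε * R) = 4 * R / x * (-(2 * ε * x)) := by field_simp; ring
    _ ≤ _ := by gcongr; linarith

/-- If two bounded functions on the right half-plane have an exponentially decaying product, then
one of them decays exponentially along the positive real axis. -/
theorem exists_forall_norm_lt_exp_of_norm_mul_le {F G : ℂ → ℂ}
    (hF : Differentiable ℂ F) (hG : Differentiable ℂ G)
    {A B C T : ℝ} (hA : 0 < A) (hB : 0 < B) (hC : 0 < C) (hT : 0 < T)
    (hFA : ∀ z : ℂ, 0 ≤ z.re → ‖F z‖ ≤ A) (hGB : ∀ z : ℂ, 0 ≤ z.re → ‖G z‖ ≤ B)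
    (hFG : ∀ z : ℂ, 0 ≤ z.re → ‖F z * G z‖ ≤ C * exp (-T * z.re)) :
    ∃ X : ℝ, (∀ x ≥ X, ‖F x‖ < exp (-(T / 32) * x)) ∨ (∀ x ≥ X, ‖G x‖ < exp (-(T / 32) * x)) := by
  by_contra! hcon
  have hε : 0 < T / 32 := by positivity
  obtain ⟨⟨x, hFx⟩, X, hX⟩ := exists_forall_le_circleAverage_log_norm hF hA hε hFA
    fun X => (hcon X).1
  obtain ⟨⟨y, hGy⟩, Y, hY⟩ := exists_forall_le_circleAverage_log_norm hG hB hε hGB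
    fun X => (hcon X).2
  set K := log (C / (A * B)) with hK
  set R := max (max X Y) (2 * |K| / T + 1) with hRdef
  have hRK : 2 * |K| / T + 1 ≤ R := le_max_right _ _
  have hR : 0 < R := lt_of_lt_of_le (by positivity) hRK
  have h1 := hX R ((le_max_left _ _).trans (le_max_left _ _))
  have h2 := hY R ((le_max_right _ _).trans (le_max_left _ _))
  have hAC : (A : ℂ) ≠ 0 := by exact_mod_cast hA.ne'
  have hBC : (B : ℂ) ≠ 0 := by exact_mod_cast hB.ne'
  have hre : ∀ z ∈ sphere (R : ℂ) |R|, 0 ≤ z.re := by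
    intro z hz
    rw [abs_of_pos hR, mem_sphere, dist_eq_norm] at hz
    have := (abs_le.1 ((Complex.abs_re_le_norm (z - R)).trans hz.le)).1
    simp at this
    linarith
  let h : ℂ → ℂ := fun z => F z * G z * Complex.exp (T * z) / C
  have hh : Differentiable ℂ h := by fun_prop
  have hint : ∀ {f : ℂ → ℂ}, Differentiable ℂ f → CircleIntegrable (fun z => log ‖f z‖) R R :=
    fun hf => MeromorphicOn.circleIntegrable_log_norm fun z _ => (hf.analyticAt z).meromorphicAt
  have hexp : circleAverage (fun z => log ‖Complex.exp (T * z)‖) R R = T * R := by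
    rw [AnalyticOnNhd.circleAverage_log_norm_of_ne_zero (g := fun z => Complex.exp (T * z))]
    · rw [Complex.norm_exp, log_exp]
      simp
    · exact fun z _ => by fun_prop
    · exact fun z _ => Complex.exp_ne_zero _
  have hexpd : Differentiable ℂ fun z : ℂ => Complex.exp (T * z) := by fun_prop
  have hhle : circleAverage (fun z => log ‖h z‖) R R ≤ 0 := by
    refine circleAverage_mono_on_of_le_circle (hint hh) fun z hz => ?_
    refine log_nonpos (norm_nonneg _) ?_
    have := hFG z (hre z hz)
    simp only [h]
    rw [norm_div, Complex.norm_of_nonneg hC.le, div_le_one hC, norm_mul (F z * G z),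
      Complex.norm_exp]
    calc _ ≤ C * exp (-T * z.re) * exp ((T * z).re) := by gcongr
      _ = C := by rw [mul_assoc, ← exp_add]; simp
  have hcod : ∀ {f : ℂ → ℂ} {x : ℂ}, Differentiable ℂ f → f x ≠ 0 →
      ∀ᶠ z in codiscreteWithin (sphere (R : ℂ) |R|), f z ≠ 0 := by
    intro f x hf hfx
    exact codiscreteWithin_mono (subset_univ _)
      (AnalyticOnNhd.preimage_zero_mem_codiscrete (fun z _ => hf.analyticAt z) hfx)
  have hsum : circleAverage (fun z => log ‖F z / A‖ + log ‖G z / B‖) R R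
      = circleAverage (fun z => (log ‖h z‖ + K) - log ‖Complex.exp (T * z)‖) R R := by
    refine circleAverage_congr_codiscreteWithin ?_ hR.ne'
    filter_upwards [hcod hF hFx, hcod hG hGy] with z hFz hGz
    have := norm_ne_zero_iff.2 hFz
    have := norm_ne_zero_iff.2 hGz
    simp only [h, hK, norm_div, norm_mul, Complex.norm_of_nonneg hA.le,
      Complex.norm_of_nonneg hB.le, Complex.norm_of_nonneg hC.le, Complex.norm_exp]
    rw [log_div (by assumption) hA.ne', log_div (by assumption) hB.ne', log_div (by positivity)
      hC.ne', log_mul (by positivity) (by positivity), log_mul (by assumption) (by assumption),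
      log_div hC.ne' (by positivity), log_mul hA.ne' hB.ne']
    ring
  rw [circleAverage_fun_add (hint (hF.div_const _)) (hint (hG.div_const _)),
    circleAverage_fun_sub (f₁ := fun z => log ‖h z‖ + K)
      ((hint hh).add (circleIntegrable_const K _ _)) (hint hexpd), hexp,
    circleAverage_fun_add (hint hh) (circleIntegrable_const K _ _), circleAverage_const] at hsum
  have hKR : K < T * R / 2 := by
    have : 2 * |K| / T < R := by linarith
    rw [div_lt_iff₀ hT] at this
    linarith [le_abs_self K]
  linarith

theorem abs_integral_exp_neg_sub_le {k : ℝ → ℝ} (hk : Continuous k) {δ M x t : ℝ}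
    (hδ : 0 ≤ δ) (h : ∀ j : ℕ, 1 ≤ j → |∫ u in 0..δ, exp (j * x * u) * k u| ≤ M) :
    |(∫ u in 0..δ, exp (-exp (x * (u - t))) * k u) - ∫ u in 0..δ, k u|
      ≤ M * (exp (exp (-x * t)) - 1) := by
  let a : ℕ → ℝ := fun j => ∫ u in 0..δ, (-exp (x * (u - t))) ^ j / j.factorial * k u
  obtain ⟨Y, hY⟩ := (isCompact_Icc (a := (0 : ℝ)) (b := δ)).exists_bound_of_continuousOn
    (f := fun u => exp (x * (u - t))) (by fun_prop)
  obtain ⟨B, hB⟩ := (isCompact_Icc (a := (0 : ℝ)) (b := δ)).exists_bound_of_continuousOn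
    hk.continuousOn
  have hsum : HasSum a (∫ u in 0..δ, exp (-exp (x * (u - t))) * k u) := by
    refine intervalIntegral.hasSum_integral_of_dominated_convergence
      (fun j _ => Y ^ j / j.factorial * B) (fun j => ?_) (fun j => ?_) ?_ ?_ ?_
    · exact (by fun_prop : Continuous fun u => (-exp (x * (u - t))) ^ j / j.factorial * k u
      ).aestronglyMeasurable
    · refine Eventually.of_forall fun u hu => ?_
      rw [uIoc_of_le hδ] at hu
      have hu' := Ioc_subset_Icc_self hu
      rw [norm_mul, norm_div, norm_pow, norm_neg, RCLike.norm_natCast]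
      have := hY u hu'
      have := hB u hu'
      have hY0 : 0 ≤ Y := (norm_nonneg _).trans (hY u hu')
      gcongr
    · exact Eventually.of_forall fun u _ => (summable_pow_div_factorial Y).mul_right B
    · exact intervalIntegrable_const
    · refine Eventually.of_forall fun u _ => HasSum.mul_right _ ?_
      have := NormedSpace.expSeries_div_hasSum_exp (-exp (x * (u - t)))
      rwa [← exp_eq_exp_ℝ] at this
  have h0 : a 0 = ∫ u in 0..δ, k u := by simp [a]
  have hs1 := (hasSum_nat_add_iff' 1).2 hsum
  have hs2 : HasSum (fun j : ℕ => M * (exp (-x * t) ^ (j + 1) / (j + 1).factorial))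
      (M * (exp (exp (-x * t)) - 1)) := by
    refine HasSum.mul_left _ ?_
    have := NormedSpace.expSeries_div_hasSum_exp (exp (-x * t))
    rw [← exp_eq_exp_ℝ] at this
    simpa using (hasSum_nat_add_iff' 1).2 this
  simp only [Finset.range_one, Finset.sum_singleton, h0] at hs1
  rw [← hs1.tsum_eq, ← norm_eq_abs]
  refine tsum_of_norm_bounded hs2 fun j => ?_
  have : a (j + 1) = (-exp (-x * t)) ^ (j + 1) / (j + 1).factorial *
      ∫ u in 0..δ, exp ((j + 1 : ℕ) * x * u) * k u := by
    rw [← intervalIntegral.integral_const_mul]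
    refine intervalIntegral.integral_congr fun u _ => ?_
    have : exp (x * (u - t)) = exp (-x * t) * exp (x * u) := by rw [← exp_add]; ring_nf
    simp only [this]
    rw [mul_assoc _ x u, exp_nat_mul, neg_mul_eq_neg_mul, mul_pow]
    ring
  rw [this, norm_mul, norm_div, norm_pow, norm_neg, RCLike.norm_natCast,
    norm_of_nonneg (exp_pos _).le, mul_comm]
  gcongr
  exact h _ (by omega)

/-- **Mikusiński's lemma**: a continuous function with bounded exponential moments on `[0, δ]`
vanishes there. -/
theorem eq_zero_of_abs_integral_exp_mul_le {k : ℝ → ℝ} (hk : Continuous k) {δ M X : ℝ}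
    (h : ∀ x ≥ X, |∫ u in 0..δ, exp (x * u) * k u| ≤ M) {t : ℝ} (ht : t ∈ Ioo 0 δ) : k t = 0 := by
  have hδ : 0 < δ := ht.1.trans ht.2
  have key : ∀ t ∈ Ioo 0 δ, ∫ u in 0..t, k u = ∫ u in 0..δ, k u := by
    intro t ht
    have hlim : Tendsto (fun x : ℝ => ∫ u in 0..δ, exp (-exp (x * (u - t))) * k u) atTop
        (𝓝 (∫ u in 0..t, k u)) := by
      rw [← intervalIntegral.integral_indicator (Ioo_subset_Icc_self ht)]
      refine intervalIntegral.tendsto_integral_filter_of_dominated_convergence (fun u => ‖k u‖)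
        (Eventually.of_forall fun x => ?_) (Eventually.of_forall fun x => ?_) ?_ ?_
      · exact (by fun_prop : Continuous fun u => exp (-exp (x * (u - t))) * k u
      ).aestronglyMeasurable
      · refine Eventually.of_forall fun u _ => ?_
        rw [norm_mul, norm_of_nonneg (exp_pos _).le]
        exact mul_le_of_le_one_left (norm_nonneg _) (exp_le_one_iff.2 (neg_nonpos.2 (exp_pos _).le))
      · exact hk.norm.intervalIntegrable _ _
      · filter_upwards [compl_mem_ae_iff.2 (measure_singleton t)] with u hu _
        rcases lt_or_gt_of_ne hu with hu | hu
        · rw [indicator_of_mem (show u ∈ {x | x ≤ t} from hu.le)]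
          have h1 : Tendsto (fun x : ℝ => x * (u - t)) atTop atBot :=
            tendsto_id.atTop_mul_const_of_neg (by linarith)
          have h2 := (continuous_exp.tendsto _).comp ((tendsto_exp_atBot.comp h1).neg)
          simpa [Function.comp_def] using h2.mul_const (k u)
        · rw [indicator_of_notMem (show u ∉ {x | x ≤ t} from not_le.2 hu)]
          have h1 : Tendsto (fun x : ℝ => x * (u - t)) atTop atTop :=
            tendsto_id.atTop_mul_const (by linarith)
          have h2 := tendsto_exp_atBot.comp
            (tendsto_neg_atTop_atBot.comp (tendsto_exp_atTop.comp h1))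
          simpa [Function.comp_def] using h2.mul_const (k u)
    have hlim' : Tendsto (fun x : ℝ => M * (exp (exp (-x * t)) - 1)) atTop (𝓝 0) := by
      have h1 : Tendsto (fun x : ℝ => -x * t) atTop atBot :=
        tendsto_neg_atTop_atBot.atBot_mul_const ht.1
      have h2 := (continuous_exp.tendsto _).comp (tendsto_exp_atBot.comp h1)
      simpa [Function.comp_def] using (h2.sub_const 1).const_mul M
    have hle := le_of_tendsto_of_tendsto ((hlim.sub_const (∫ u in 0..δ, k u)).abs) hlim' (by
      filter_upwards [eventually_ge_atTop (max X 0)] with x hx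
      refine abs_integral_exp_neg_sub_le hk hδ.le fun j hj => h _ ?_
      have hj' : (1 : ℝ) ≤ j := by exact_mod_cast hj
      have hx0 := (le_max_right X 0).trans hx
      nlinarith [(le_max_left X 0).trans hx])
    exact sub_eq_zero.1 (abs_nonpos_iff.1 hle)
  have hd : HasDerivAt (fun t => ∫ u in 0..t, k u) (k t) t :=
    hk.integral_hasStrictDerivAt 0 t |>.hasDerivAt
  have hc : HasDerivAt (fun t => ∫ u in 0..t, k u) 0 t :=
    (hasDerivAt_const t (∫ u in 0..δ, k u)).congr_of_eventuallyEq
      (eventually_of_mem (Ioo_mem_nhds ht.1 ht.2) key)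
  exact hd.unique hc

theorem norm_cexp_neg_mul (z : ℂ) (s : ℝ) : ‖Complex.exp (-z * s)‖ = exp (-z.re * s) := by
  simp [Complex.norm_exp]

theorem differentiable_integral_cexp_neg_mul {f : ℝ → ℝ} (hf : Continuous f) {T : ℝ} (hT : 0 ≤ T) :
    Differentiable ℂ fun z : ℂ => ∫ s in 0..T, Complex.exp (-z * s) * f s := by
  intro z
  refine (intervalIntegral.hasDerivAt_integral_of_dominated_loc_of_deriv_le
    (F' := fun z s => -s * Complex.exp (-z * s) * f s)
    (bound := fun s => T * exp ((‖z‖ + 1) * T) * ‖f s‖)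
    (ball_mem_nhds z one_pos) ?_ ?_ ?_ ?_ ?_ ?_).2.differentiableAt
  · exact Eventually.of_forall fun w =>
      (by fun_prop : Continuous fun s : ℝ => Complex.exp (-w * s) * f s
      ).aestronglyMeasurable
  · exact (by fun_prop : Continuous fun s : ℝ => Complex.exp (-z * s) * f s).intervalIntegrable _ _
  · exact (by fun_prop : Continuous fun s : ℝ => -s * Complex.exp (-z * s) * f s
      ).aestronglyMeasurable
  · refine Eventually.of_forall fun s hs w hw => ?_
    rw [uIoc_of_le hT] at hs
    have hw : ‖w‖ ≤ ‖z‖ + 1 := by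
      have h1 := norm_sub_norm_le w z
      have h2 : ‖w - z‖ < 1 := by simpa [dist_eq_norm] using hw
      linarith
    have hwr : -w.re ≤ ‖z‖ + 1 := (neg_le_abs _).trans ((Complex.abs_re_le_norm w).trans hw)
    rw [norm_mul, norm_mul, norm_cexp_neg_mul, norm_neg, Complex.norm_real, Complex.norm_real,
      norm_of_nonneg hs.1.le]
    have h3 : -w.re * s ≤ (‖z‖ + 1) * T := by
      have := hs.1
      calc -w.re * s ≤ (‖z‖ + 1) * s := by gcongr
        _ ≤ _ := by gcongr; exact hs.2
    have := hs.2
    gcongr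
  · exact (by fun_prop : Continuous fun s : ℝ => T * exp ((‖z‖ + 1) * T) * ‖f s‖
      ).intervalIntegrable _ _
  · refine Eventually.of_forall fun s _ w _ => ?_
    have := (((hasDerivAt_id w).neg.mul_const (s : ℂ)).cexp).mul_const (f s : ℂ)
    refine this.congr_deriv ?_
    simp only [Pi.neg_apply, id]
    ring

theorem norm_integral_cexp_neg_mul_le {f : ℝ → ℝ} (hf : Continuous f) {a b : ℝ}
    (hab : a ≤ b) {z : ℂ} (hz : 0 ≤ z.re) :
    ‖∫ s in a..b, Complex.exp (-z * s) * f s‖ ≤ exp (-a * z.re) * ∫ s in a..b, |f s| := by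
  rw [← intervalIntegral.integral_const_mul]
  refine intervalIntegral.norm_integral_le_of_norm_le hab (Eventually.of_forall fun s hs => ?_)
    ((by fun_prop : Continuous fun s => exp (-a * z.re) * |f s|).intervalIntegrable _ _)
  rw [norm_mul, norm_cexp_neg_mul, Complex.norm_real, norm_eq_abs]
  gcongr ?_ * _
  rw [exp_le_exp]
  nlinarith [hs.1]

theorem exists_norm_mul_integral_cexp_neg_mul_le {f g : ℝ → ℝ} (hf : Continuous f)
    (hg : Continuous g) {T : ℝ} (hT : 0 ≤ T)
    (hconv : ∀ t ∈ Icc (0 : ℝ) T, (∫ s in 0..t, f s * g (t - s)) = 0) :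
    ∃ C > 0, ∀ z : ℂ, 0 ≤ z.re →
      ‖(∫ s in 0..T, Complex.exp (-z * s) * f s) * ∫ s in 0..T, Complex.exp (-z * s) * g s‖
        ≤ C * exp (-T * z.re) := by
  let e : ℂ → (ℝ → ℝ) → ℝ → ℂ := fun z f => (Ioc 0 T).indicator fun s => Complex.exp (-z * s) * f s
  have hint : ∀ z {f : ℝ → ℝ}, Continuous f → Integrable (e z f) := fun z f hf =>
    (integrable_indicator_iff measurableSet_Ioc).2
      (by fun_prop : Continuous fun s : ℝ => Complex.exp (-z * s) * f s).integrableOn_Ioc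
  have heq : ∀ z (f : ℝ → ℝ), ∫ s in 0..T, Complex.exp (-z * s) * f s = ∫ s, e z f s := by
    intro z f
    rw [intervalIntegral.integral_of_le hT, ← integral_indicator measurableSet_Ioc]
  let L := ContinuousLinearMap.mul ℂ ℂ
  let c : ℝ → ℂ := e 0 f ⋆[L] e 0 g
  have hc : Integrable c := (hint 0 hf).integrable_convolution L (hint 0 hg)
  have he : ∀ z (f : ℝ → ℝ) s, e z f s = Complex.exp (-z * s) * e 0 f s := fun z f s => by
    by_cases hs : s ∈ Ioc 0 T <;> simp [e, hs]
  have hcz : ∀ z r, (e z f ⋆[L] e z g) r = Complex.exp (-z * r) * c r := fun z r => by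
    simp only [c, convolution, L, ContinuousLinearMap.mul_apply']
    rw [← integral_const_mul]
    congr 1 with s
    rw [he z f, he z g, show -z * (r : ℂ) = -z * s + -z * ((r - s : ℝ) : ℂ) by push_cast; ring,
      Complex.exp_add]
    ring
  have hc0 : ∀ r ≤ T, c r = 0 := fun r hr => by
    rcases le_or_gt r 0 with hr0 | hr0
    · refine (integral_congr_ae (Eventually.of_forall fun s => ?_)).trans (integral_zero _ _)
      by_cases hs : s ∈ Ioc 0 T
      · have : r - s ∉ Ioc 0 T := fun h => by linarith [h.1, hs.1]
        simp [e, this]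
      · simp [e, hs]
    · have h1 : c r = ∫ s in Ioo 0 r, ((f s * g (r - s) : ℝ) : ℂ) := by
        rw [← integral_indicator measurableSet_Ioo]
        simp only [c, convolution, L, ContinuousLinearMap.mul_apply']
        congr 1 with s
        by_cases hs : s ∈ Ioo 0 r
        · have h1 : s ∈ Ioc 0 T := ⟨hs.1, hs.2.le.trans hr⟩
          have h2 : r - s ∈ Ioc 0 T := ⟨by linarith [hs.2], by linarith [hs.1]⟩
          simp only [e, indicator_of_mem h1, indicator_of_mem h2, indicator_of_mem hs]
          simp
        · rw [indicator_of_notMem hs]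
          by_cases h1 : s ∈ Ioc 0 T
          · have h2 : r - s ∉ Ioc 0 T := fun h => hs ⟨h1.1, by linarith [h.1]⟩
            simp [e, h2]
          · simp [e, h1]
      rw [h1, integral_complex_ofReal, ← integral_Ioc_eq_integral_Ioo,
        ← intervalIntegral.integral_of_le hr0.le, hconv r ⟨hr0.le, hr⟩, Complex.ofReal_zero]
  refine ⟨(∫ r, ‖c r‖) + 1, by positivity, fun z hz => ?_⟩
  have hmul := integral_convolution L (hint z hf) (hint z hg)
  rw [heq, heq]
  change _ = (∫ s, e z f s) * ∫ s, e z g s at hmul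
  rw [← hmul]
  calc _ ≤ ∫ r, ‖c r‖ * exp (-T * z.re) := by
        refine norm_integral_le_of_norm_le (hc.norm.mul_const _) (Eventually.of_forall fun r => ?_)
        rw [hcz, norm_mul, norm_cexp_neg_mul, mul_comm]
        rcases le_or_gt r T with hr | hr
        · simp [hc0 r hr]
        · gcongr ?_ * ?_
          rw [exp_le_exp]
          nlinarith
    _ = (∫ r, ‖c r‖) * exp (-T * z.re) := integral_mul_const _ _
    _ ≤ _ := by gcongr; linarith

theorem eq_zero_of_norm_integral_cexp_neg_mul_le {f : ℝ → ℝ} (hf : Continuous f) {T δ X : ℝ}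
    (hδT : δ ≤ T)
    (h : ∀ x ≥ X, ‖∫ s in 0..T, Complex.exp (-(x : ℂ) * s) * f s‖ ≤ exp (-δ * x)) {t : ℝ}
    (ht : t ∈ Ioo 0 δ) : f t = 0 := by
  have hδ : 0 < δ := ht.1.trans ht.2
  have key := eq_zero_of_abs_integral_exp_mul_le (k := fun u => f (δ - u)) (δ := δ)
    (M := 1 + ∫ s in δ..T, |f s|) (X := max X 0) (by fun_prop) (fun x hx => ?_)
    (t := δ - t) ⟨by linarith [ht.2], by linarith [ht.1]⟩
  · simpa using key
  have hx0 : 0 ≤ x := (le_max_right X 0).trans hx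
  have hcont : Continuous fun s : ℝ => Complex.exp (-(x : ℂ) * s) * f s := by fun_prop
  have h1 : ∫ u in 0..δ, exp (x * u) * f (δ - u)
      = exp (δ * x) * ∫ s in 0..δ, exp (-x * s) * f s := by
    have := intervalIntegral.integral_comp_sub_left (a := 0) (b := δ)
      (fun s => exp (x * (δ - s)) * f s) δ
    simp only [sub_sub_cancel, sub_self, sub_zero] at this
    rw [this, ← intervalIntegral.integral_const_mul]
    congr 1 with s
    rw [← mul_assoc, ← exp_add]
    ring_nf
  have h2 : ‖∫ s in 0..δ, Complex.exp (-(x : ℂ) * s) * f s‖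
      = |∫ s in 0..δ, exp (-x * s) * f s| := by
    rw [← norm_eq_abs, ← Complex.norm_real, ← intervalIntegral.integral_ofReal]
    simp
  have h3 := intervalIntegral.integral_add_adjacent_intervals (hcont.intervalIntegrable 0 δ)
    (hcont.intervalIntegrable (μ := volume) δ T)
  have h4 := norm_integral_cexp_neg_mul_le hf hδT (z := x) (by simpa using hx0)
  rw [Complex.ofReal_re] at h4
  have h5 := h x ((le_max_left X 0).trans hx)
  rw [h1, abs_mul, abs_of_pos (exp_pos _), ← h2, eq_sub_of_add_eq h3]
  calc _ ≤ exp (δ * x) * (exp (-δ * x) + exp (-δ * x) * ∫ s in δ..T, |f s|) := by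
        gcongr
        exact (norm_sub_le _ _).trans (add_le_add h5 h4)
    _ = exp (δ * x + -δ * x) * (1 + ∫ s in δ..T, |f s|) := by rw [exp_add]; ring
    _ = _ := by simp

theorem forall_eq_zero_or_forall_eq_zero_of_convolution_eq_zero {f g : ℝ → ℝ} (hf : Continuous f)
    (hg : Continuous g) {T : ℝ} (hT : 0 < T)
    (hconv : ∀ t ∈ Icc (0 : ℝ) T, (∫ s in 0..t, f s * g (t - s)) = 0) :
    (∀ t ∈ Ioo 0 (T / 32), f t = 0) ∨ ∀ t ∈ Ioo 0 (T / 32), g t = 0 := by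
  obtain ⟨C, hC, hFG⟩ := exists_norm_mul_integral_cexp_neg_mul_le hf hg hT.le hconv
  have hb : ∀ {f : ℝ → ℝ}, Continuous f → ∀ z : ℂ, 0 ≤ z.re →
      ‖∫ s in 0..T, Complex.exp (-z * s) * f s‖ ≤ (∫ s in 0..T, |f s|) + 1 := fun hf z hz => by
    have := norm_integral_cexp_neg_mul_le hf hT.le hz
    simp only [neg_zero, zero_mul, exp_zero, one_mul] at this
    linarith
  have hpos : ∀ f : ℝ → ℝ, 0 < (∫ s in 0..T, |f s|) + 1 := fun f => by
    have := intervalIntegral.integral_nonneg (μ := volume) hT.le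
      fun s (_ : s ∈ Icc 0 T) => abs_nonneg (f s)
    linarith
  obtain ⟨X, hX | hX⟩ := exists_forall_norm_lt_exp_of_norm_mul_le
    (differentiable_integral_cexp_neg_mul hf hT.le) (differentiable_integral_cexp_neg_mul hg hT.le)
    (hpos f) (hpos g) hC hT (hb hf) (hb hg) hFG
  · exact .inl fun t => eq_zero_of_norm_integral_cexp_neg_mul_le hf (by linarith)
      fun x hx => (hX x hx).le
  · exact .inr fun t => eq_zero_of_norm_integral_cexp_neg_mul_le hg (by linarith)
      fun x hx => (hX x hx).le

/-- **Titchmarsh's convolution theorem**, for `0` in the support of `g`. -/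
theorem eq_zero_of_convolution_eq_zero {f g : ℝ → ℝ} (hf : Continuous f) (hg : Continuous g) {T : ℝ}
    (hconv : ∀ t ∈ Icc (0 : ℝ) T, (∫ s in 0..t, f s * g (t - s)) = 0)
    (hg0 : ∀ ε > 0, ∃ s ∈ Ioo 0 ε, g s ≠ 0) {t : ℝ} (ht : t ∈ Ioo 0 T) : f t = 0 := by
  by_contra hft
  let S : Set ℝ := {s | 0 < s ∧ f s ≠ 0}
  have hbdd : BddBelow S := ⟨0, fun s hs => hs.1.le⟩
  have htS : t ∈ S := ⟨ht.1, hft⟩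
  set a := sInf S with ha
  have ha0 : 0 ≤ a := le_csInf ⟨t, htS⟩ fun s hs => hs.1.le
  have hat : a ≤ t := csInf_le hbdd htS
  have hfa : ∀ s ∈ Ioo 0 a, f s = 0 := fun s hs => by
    by_contra hfs
    exact (csInf_le hbdd (show s ∈ S from ⟨hs.1, hfs⟩)).not_gt hs.2
  have hTa : 0 < T - a := by linarith [ht.2]
  have hconv' : ∀ r ∈ Icc (0 : ℝ) (T - a), (∫ s in 0..r, f (s + a) * g (r - s)) = 0 := by
    intro r hr
    have h1 := hconv (r + a) ⟨by linarith [hr.1], by linarith [hr.2]⟩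
    have hc : Continuous fun s => f s * g (r + a - s) := by fun_prop
    rw [← intervalIntegral.integral_add_adjacent_intervals (hc.intervalIntegrable 0 a)
      (hc.intervalIntegrable a (r + a)), intervalIntegral.integral_of_le ha0,
      integral_Ioc_eq_integral_Ioo, setIntegral_eq_zero_of_forall_eq_zero fun s hs => by
        rw [hfa s hs, zero_mul], zero_add] at h1
    have h2 := intervalIntegral.integral_comp_add_right (a := 0) (b := r)
      (fun s => f s * g (r + a - s)) a
    simpa only [add_sub_add_right_eq_sub, zero_add, h1] using h2
  rcases forall_eq_zero_or_forall_eq_zero_of_convolution_eq_zero (f := fun s => f (s + a))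
    (by fun_prop) hg hTa hconv' with h | h
  · have hle : a + (T - a) / 32 ≤ a := by
      refine le_csInf ⟨t, htS⟩ fun s hs => ?_
      by_contra! hlt
      have has : a ≤ s := csInf_le hbdd hs
      have hev : ∀ᶠ r in 𝓝[>] s, f r ≠ 0 :=
        nhdsWithin_le_nhds (hf.continuousAt.eventually_ne hs.2)
      obtain ⟨r, hfr, hr⟩ := (hev.and (Ioo_mem_nhdsGT hlt)).exists
      exact hfr (by simpa using h (r - a) ⟨by linarith [hr.1], by linarith [hr.2]⟩)
    linarith
  · obtain ⟨s, hs, hgs⟩ := hg0 ((T - a) / 32) (by positivity)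
    exact hgs (h s hs)

theorem eq_zero_of_convolution_eq_zero_of_analyticOnNhd {f g : ℝ → ℝ} (hf : ContinuousOn f (Ici 0))
    (hg : ContinuousOn g (Ici 0)) {T : ℝ}
    (hconv : ∀ t ∈ Icc (0 : ℝ) T, (∫ s in 0..t, f s * g (t - s)) = 0)
    (hga : AnalyticOnNhd ℝ g (Ioi 0)) {x : ℝ} (hx : 0 < x) (hgx : g x ≠ 0) {t : ℝ}
    (ht : t ∈ Ioo 0 T) : f t = 0 := by
  have hcont : ∀ {f : ℝ → ℝ}, ContinuousOn f (Ici 0) → Continuous fun s => f (max s 0) := fun hf =>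
    hf.comp_continuous (by fun_prop) fun s => le_max_right s 0
  have key := eq_zero_of_convolution_eq_zero (hcont hf) (hcont hg) (T := T) (fun t ht => ?_)
    (fun ε hε => ?_) ht
  · simpa [max_eq_left ht.1.le] using key
  · refine (intervalIntegral.integral_congr fun s hs => ?_).trans (hconv t ht)
    rw [uIcc_of_le ht.1] at hs
    simp only [max_eq_left hs.1, max_eq_left (sub_nonneg.2 hs.2)]
  · by_contra! hg0
    have hev : g =ᶠ[𝓝 (ε / 2)] 0 := by
      filter_upwards [Ioo_mem_nhds (half_pos hε) (half_lt_self hε)] with s hs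
      simpa [max_eq_left hs.1.le] using hg0 s hs
    exact hgx (hga.eqOn_zero_of_preconnected_of_eventuallyEq_zero
      isPreconnected_Ioi (half_pos hε : ε / 2 ∈ Ioi 0) hev hx)

end

/-- Titchmarsh-type uniqueness: if f, g are continuous on [0,∞), their convolution
vanishes on [0,T], g is real-analytic on (0,∞) and g(t) ≠ 0 for all t > T₁,
then f = 0 a.e. on (0,T). -/
theorem titchmarsh_uniqueness (T T₁ : ℝ) (hT : 0 < T) (hT₁ : 0 < T₁) (f g : ℝ → ℝ)
    (hf : ContinuousOn f (Set.Ici 0)) (hg : ContinuousOn g (Set.Ici 0))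
    (hconv : ∀ t ∈ Set.Icc (0:ℝ) T, (∫ s in (0:ℝ)..t, f s * g (t - s)) = 0)
    (hganal : AnalyticOnNhd ℝ g (Set.Ioi 0))
    (hgne : ∀ t : ℝ, T₁ < t → g t ≠ 0) :
    ∀ᵐ t ∂(volume.restrict (Set.Ioo 0 T)), f t = 0 := by
  refine ae_restrict_of_forall_mem measurableSet_Ioo fun t ht => ?_
  exact eq_zero_of_convolution_eq_zero_of_analyticOnNhd hf hg hconv hganal (x := T₁ + 1)
    (by linarith) (hgne _ (lt_add_one T₁)) ht
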